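/- arXiv:1602.08801 — 2 statements merged into one kernel-verified Lean document; each statement's English description precedes it below -/
import Mathlib

section
/- Let 1/2 < H < 1. There exist constants 0 < c ≤ C (depending only on H) such that for all 0 < r < s, with μ = (1/2)(s^{2H} + r^{2H} − (s−r)^{2H}): c·(s−r)·s^{2H−1} ≤ s^{2H} − μ ≤ C·(s−r)·s^{2H−1}. -/
/-- For `p ≤ 2`, the function `x ↦ x ^ (p - 1) / x` is antitone on the positive reals. -/
lemma mul_rpow_sub_one_le_mul_rpow_sub_one {p r s : ℝ} (hp : p ≤ 2) (hr : 0 < r) (hrs : r ≤ s) :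
    r * s ^ (p - 1) ≤ s * r ^ (p - 1) := by
  have hs : 0 < s := hr.trans_le hrs
  have factor : ∀ x : ℝ, 0 < x → x = x ^ (2 - p) * x ^ (p - 1) := fun x hx => by
    rw [← Real.rpow_add hx]
    norm_num
  calc r * s ^ (p - 1) = r ^ (2 - p) * (r ^ (p - 1) * s ^ (p - 1)) := by
        rw [← mul_assoc, ← factor r hr]
    _ ≤ s ^ (2 - p) * (r ^ (p - 1) * s ^ (p - 1)) := by
        gcongr
    _ = s * r ^ (p - 1) := by
        rw [mul_comm (r ^ (p - 1)), ← mul_assoc, ← factor s hs]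

theorem stmt_4 (H : ℝ) (hH0 : 1 / 2 < H) (hH1 : H < 1) :
    ∃ c C : ℝ, 0 < c ∧ c ≤ C ∧ ∀ r s : ℝ, 0 < r → r < s →
      c * (s - r) * s ^ (2 * H - 1) ≤
        s ^ (2 * H) - (1 / 2) * (s ^ (2 * H) + r ^ (2 * H) - (s - r) ^ (2 * H)) ∧
      s ^ (2 * H) - (1 / 2) * (s ^ (2 * H) + r ^ (2 * H) - (s - r) ^ (2 * H)) ≤
        C * (s - r) * s ^ (2 * H - 1) := by
  refine ⟨1 / 2, 3 / 2, by norm_num, by norm_num, fun r s hr hrs => ?_⟩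
  have hs : 0 < s := hr.trans hrs
  have hd : 0 < s - r := sub_pos.2 hrs
  have split : ∀ x : ℝ, 0 < x → x ^ (2 * H) = x * x ^ (2 * H - 1) := fun x hx => by
    rw [← Real.rpow_one_add' hx.le (by linarith)]
    norm_num
  have hBA : r ^ (2 * H - 1) ≤ s ^ (2 * H - 1) :=
    Real.rpow_le_rpow hr.le hrs.le (by linarith)
  have hDA : (s - r) ^ (2 * H - 1) ≤ s ^ (2 * H - 1) :=
    Real.rpow_le_rpow hd.le (by linarith) (by linarith)
  have hAB := mul_rpow_sub_one_le_mul_rpow_sub_one (p := 2 * H) (by linarith) hr hrs.le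
  have hD : 0 < (s - r) ^ (2 * H - 1) := Real.rpow_pos_of_pos hd _
  have hA : 0 < s ^ (2 * H - 1) := Real.rpow_pos_of_pos hs _
  rw [split s hs, split r hr, split (s - r) hd]
  generalize s ^ (2 * H - 1) = A at *
  generalize r ^ (2 * H - 1) = B at *
  generalize (s - r) ^ (2 * H - 1) = D at *
  constructor
  · nlinarith [mul_le_mul_of_nonneg_left hBA hr.le, mul_pos hd hD]
  · have key : (2 * r - s) * A ≤ r * B := by
      refine le_of_mul_le_mul_left ?_ hs
      nlinarith [mul_le_mul_of_nonneg_left hAB hr.le, mul_nonneg (sq_nonneg (s - r)) hA.le]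
    nlinarith [mul_le_mul_of_nonneg_left hDA hd.le]
end

section
/- Let 1/2 < H < 1 and T > 0. Define ρ(s,r)² = (sr)^{2H} − μ(s,r)² with μ(s,r) = (1/2)(s^{2H}+r^{2H}−|s−r|^{2H}). Then there is a constant C (depending on H and T) such that for all 0 ≤ t < t' ≤ T: ∫_t^{t'} ∫_t^{t'} (1/ρ(s,r))·(2H s^{2H−1})(2H r^{2H−1}) ds dr ≤ C·(t'−t)^{2H₀}, where H₀ = H if 1/2 < H ≤ 2/3 and H₀ = 1 − H/2 if 2/3 < H < 1. -/
open MeasureTheory intervalIntegral Set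

/-- Quantitative strict subadditivity of `x ↦ x ^ H` for `H ≤ 1`. -/
lemma rpow_subadditivity_gap {H x y : ℝ} (hH0 : 0 ≤ H) (hH1 : H ≤ 1) (hx : 0 < x) (hxy : x ≤ y) :
    (2 - 2 ^ H) * x ^ H ≤ y ^ H + x ^ H - (y + x) ^ H := by
  have hy : 0 < y := hx.trans_le hxy
  have hconc := Real.concaveOn_rpow hH0 hH1
  have hl : 0 ≤ x / y := by positivity
  have hl' : 0 ≤ 1 - x / y := by rw [sub_nonneg, div_le_one hy]; exact hxy
  have hmx : x ∈ Ici (0 : ℝ) := hx.le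
  have hms : y + x ∈ Ici (0 : ℝ) := (add_pos hy hx).le
  have h1 := hconc.2 hmx hms hl hl' (by ring)
  have h2 := hconc.2 hmx hms hl' hl (by ring)
  have e1 : x / y * x + (1 - x / y) * (y + x) = y := by field_simp; ring
  have e2 : (1 - x / y) * x + x / y * (y + x) = 2 * x := by field_simp; ring
  simp only [smul_eq_mul] at h1 h2
  rw [e1] at h1
  rw [e2, Real.mul_rpow (by norm_num) hx.le] at h2
  linarith

lemma rpow_subadditivity_gap_mul {H x y : ℝ} (hH0 : 0 ≤ H) (hH1 : H ≤ 1) (hx : 0 < x)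
    (hy : 0 < y) :
    (2 - 2 ^ H) * (x ^ H * y ^ H) ≤ (y ^ H + x ^ H - (y + x) ^ H) * (y + x) ^ H := by
  wlog hxy : x ≤ y generalizing x y
  · have := this hy hx (le_of_not_ge hxy)
    rw [mul_comm (x ^ H), add_comm y x, add_comm (y ^ H)]
    exact this
  have hgap := rpow_subadditivity_gap hH0 hH1 hx hxy
  have h2 : (2 : ℝ) ^ H ≤ 2 := by
    simpa using Real.rpow_le_rpow_of_exponent_le (by norm_num : (1 : ℝ) ≤ 2) hH1
  have hxH : 0 < x ^ H := Real.rpow_pos_of_pos hx H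
  rw [← mul_assoc]
  refine mul_le_mul hgap (Real.rpow_le_rpow hy.le (by linarith) hH0) (by positivity) ?_
  exact (mul_nonneg (by linarith) hxH.le).trans hgap

/-- The lower bound on the covariance determinant of fractional Brownian motion. -/
lemma fbm_covariance_det_lower_bound {H r d : ℝ} (hH0 : 1 / 2 < H) (hH1 : H < 1) (hr : 0 < r)
    (hd : 0 < d) :
    (1 / 2) * (2 - 2 ^ H) * (r ^ H * d ^ H) ^ 2 ≤
      ((r + d) * r) ^ (2 * H) -
        ((1 / 2) * ((r + d) ^ (2 * H) + r ^ (2 * H) - d ^ (2 * H))) ^ 2 := by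
  have hs : 0 < r + d := by positivity
  have sq_rpow : ∀ x : ℝ, 0 < x → x ^ (2 * H) = (x ^ H) ^ 2 := fun x hx => by
    rw [mul_comm, Real.rpow_mul hx.le, Real.rpow_two]
  have hsuper := Real.add_rpow_le_rpow_add hr.le hd.le (by linarith : 1 ≤ 2 * H)
  have hmono : r ^ H ≤ (r + d) ^ H := Real.rpow_le_rpow hr.le (by linarith) (by linarith)
  have hgap := rpow_subadditivity_gap_mul (by linarith : 0 ≤ H) hH1.le hd hr
  rw [Real.mul_rpow hs.le hr.le]
  rw [sq_rpow _ hr, sq_rpow _ hs, sq_rpow _ hd] at *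
  have hR := Real.rpow_pos_of_pos hr H
  have hD := Real.rpow_pos_of_pos hd H
  have hS := Real.rpow_pos_of_pos hs H
  have h2 : (2 : ℝ) ^ H ≤ 2 := by
    simpa using Real.rpow_le_rpow_of_exponent_le (by norm_num : (1 : ℝ) ≤ 2) hH1.le
  set R := r ^ H
  set D := d ^ H
  set S := (r + d) ^ H
  have hX : 0 ≤ R + D - S := by
    by_contra hneg
    have : (R + D - S) * S < 0 := mul_neg_of_neg_of_pos (by linarith) hS
    have : 0 ≤ (2 - 2 ^ H) * (D * R) := mul_nonneg (by linarith) (by positivity)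
    linarith
  calc (1 / 2) * (2 - 2 ^ H) * (R * D) ^ 2
      = (1 / 2) * ((2 - 2 ^ H) * (D * R)) * (D * R) := by ring
    _ ≤ (1 / 2) * ((R + D - S) * S) * (D * R) := by gcongr
    _ = ((1 / 2) * (R + D - S) * D) * (S * R) := by ring
    _ ≤ ((1 / 2) * (R + D - S) * (D + S - R)) * (S * R + 1 / 2 * (S ^ 2 + R ^ 2 - D ^ 2)) := by
        gcongr
        · have : 0 ≤ D + S - R := by linarith
          positivity
        · linarith
        · nlinarith
    _ = _ := by ring

lemma rpow_mul_rpow_le_add {x y a b : ℝ} (hx : 0 < x) (hy : 0 < y) (ha : a ≤ 0) (hb : b ≤ 0) :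
    x ^ a * y ^ b ≤ x ^ (a + b) + y ^ (a + b) := by
  have hxp := Real.rpow_pos_of_pos hx (a + b)
  have hyp := Real.rpow_pos_of_pos hy (a + b)
  rcases le_total x y with h | h
  · have : x ^ a * y ^ b ≤ x ^ a * x ^ b := by
      gcongr ?_ * ?_
      exact Real.rpow_le_rpow_of_nonpos hx h hb
    rw [← Real.rpow_add hx] at this
    linarith
  · have : x ^ a * y ^ b ≤ y ^ a * y ^ b := by
      gcongr ?_ * ?_
      exact Real.rpow_le_rpow_of_nonpos hy h ha
    rw [← Real.rpow_add hy] at this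
    linarith

lemma rpow_le_mul_rpow {x T p q : ℝ} (hx : 0 < x) (hxT : x ≤ T) (hqp : q ≤ p) :
    x ^ p ≤ T ^ (p - q) * x ^ q := by
  rw [show x ^ p = x ^ (p - q) * x ^ q by rw [← Real.rpow_add hx]; ring_nf]
  gcongr

lemma fbm_kernel_majorant {H T : ℝ} (hH0 : 1 / 2 < H) (hH1 : H < 1) (hT : 0 < T) :
    ∃ M : ℝ, 0 < M ∧ ∀ r d : ℝ, 0 < r → 0 < d → r ≤ T → d ≤ T →
      (r + d) ^ (2 * H - 1) * r ^ (2 * H - 1) * (r ^ (-H) * d ^ (-H)) ≤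
        M * (r ^ (2 * (if H ≤ 2 / 3 then H else 1 - H / 2) - 2) +
          d ^ (2 * (if H ≤ 2 / 3 then H else 1 - H / 2) - 2)) := by
  have split : ∀ r d : ℝ, 0 < r → 0 < d →
      (r + d) ^ (2 * H - 1) * r ^ (2 * H - 1) * (r ^ (-H) * d ^ (-H)) ≤
        r ^ (3 * H - 2) * d ^ (-H) + (r ^ (2 * H - 2) + d ^ (2 * H - 2)) := by
    intro r d hr hd
    have hsub := Real.rpow_add_le_add_rpow hr.le hd.le (by linarith : 0 ≤ 2 * H - 1)
      (by linarith : 2 * H - 1 ≤ 1)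
    have hmin := rpow_mul_rpow_le_add hr hd (by linarith : H - 1 ≤ 0) (by linarith : H - 1 ≤ 0)
    rw [show H - 1 + (H - 1) = 2 * H - 2 by ring] at hmin
    have e1 : r ^ (3 * H - 2) = r ^ (2 * H - 1) * r ^ (2 * H - 1) * r ^ (-H) := by
      rw [← Real.rpow_add hr, ← Real.rpow_add hr]; ring_nf
    have e2 : r ^ (H - 1) = r ^ (2 * H - 1) * r ^ (-H) := by
      rw [← Real.rpow_add hr]; ring_nf
    have e3 : d ^ (H - 1) = d ^ (2 * H - 1) * d ^ (-H) := by
      rw [← Real.rpow_add hd]; ring_nf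
    calc _ ≤ (r ^ (2 * H - 1) + d ^ (2 * H - 1)) * r ^ (2 * H - 1) * (r ^ (-H) * d ^ (-H)) := by
          gcongr
      _ = r ^ (3 * H - 2) * d ^ (-H) + r ^ (H - 1) * d ^ (H - 1) := by rw [e1, e2, e3]; ring
      _ ≤ _ := by gcongr
  split_ifs with h
  · refine ⟨2, by norm_num, fun r d hr hd _ _ => (split r d hr hd).trans ?_⟩
    have hmin := rpow_mul_rpow_le_add hr hd (by linarith : 3 * H - 2 ≤ 0) (by linarith : -H ≤ 0)
    rw [show 3 * H - 2 + -H = 2 * H - 2 by ring] at hmin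
    linarith
  · have h' : 2 / 3 < H := not_le.mp h
    refine ⟨2 * T ^ (3 * H - 2), by positivity, fun r d hr hd hrT hdT =>
      (split r d hr hd).trans ?_⟩
    rw [show 2 * (1 - H / 2) - 2 = -H by ring]
    have hr1 : r ^ (3 * H - 2) * d ^ (-H) ≤ T ^ (3 * H - 2) * d ^ (-H) := by
      gcongr ?_ * ?_
      exact Real.rpow_le_rpow hr.le hrT (by linarith)
    have hr2 := rpow_le_mul_rpow hr hrT (by linarith : -H ≤ 2 * H - 2)
    have hd2 := rpow_le_mul_rpow hd hdT (by linarith : -H ≤ 2 * H - 2)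
    rw [show 2 * H - 2 - -H = 3 * H - 2 by ring] at hr2 hd2
    have : 0 < T ^ (3 * H - 2) * r ^ (-H) := by positivity
    linarith

lemma integral_rpow_le {q a b : ℝ} (hq : -1 < q) (hq0 : q ≤ 0) (ha : 0 ≤ a) (hab : a ≤ b) :
    ∫ x in a..b, x ^ q ≤ (b - a) ^ (q + 1) / (q + 1) := by
  rw [integral_rpow (Or.inl hq)]
  have hpos : 0 < q + 1 := by linarith
  have := Real.rpow_add_le_add_rpow (sub_nonneg.2 hab) ha hpos.le (by linarith : q + 1 ≤ 1)
  rw [sub_add_cancel] at this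
  gcongr
  linarith

lemma intervalIntegrable_abs_sub_rpow {q : ℝ} (hq : -1 < q) (a b s : ℝ) :
    IntervalIntegrable (fun r => |s - r| ^ q) volume a b := by
  have right : ∀ c, s ≤ c → IntervalIntegrable (fun r => |s - r| ^ q) volume s c := by
    intro c hc
    have h := (intervalIntegrable_rpow' (a := 0) (b := c - s) hq).comp_sub_right s
    simp only [zero_add, sub_add_cancel] at h
    refine h.congr fun r hr => ?_
    rw [uIoc_of_le hc] at hr
    simp only [abs_sub_comm s r, abs_of_pos (sub_pos.2 hr.1)]
  have left : ∀ c, c ≤ s → IntervalIntegrable (fun r => |s - r| ^ q) volume s c := by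
    intro c hc
    have h := (intervalIntegrable_rpow' (a := 0) (b := s - c) hq).comp_sub_left s
    simp only [sub_zero, sub_sub_cancel] at h
    refine h.congr fun r hr => ?_
    rw [uIoc_of_ge hc] at hr
    simp only [abs_of_nonneg (sub_nonneg.2 hr.2)]
  have from_s : ∀ c, IntervalIntegrable (fun r => |s - r| ^ q) volume s c := fun c =>
    (le_total s c).elim (right c) (left c)
  exact (from_s a).symm.trans (from_s b)

lemma integral_abs_sub_rpow_le {q a b s : ℝ} (hq : -1 < q) (has : a ≤ s) (hsb : s ≤ b) :
    ∫ r in a..b, |s - r| ^ q ≤ 2 * (b - a) ^ (q + 1) / (q + 1) := by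
  have hpos : 0 < q + 1 := by linarith
  rw [← integral_add_adjacent_intervals (intervalIntegrable_abs_sub_rpow hq a s s)
    (intervalIntegrable_abs_sub_rpow hq s b s)]
  have h1 : ∫ r in a..s, |s - r| ^ q = (s - a) ^ (q + 1) / (q + 1) := by
    have : ∫ r in a..s, |s - r| ^ q = ∫ r in a..s, (s - r) ^ q := by
      refine integral_congr fun r hr => ?_
      rw [uIcc_of_le has] at hr
      simp only [abs_of_nonneg (sub_nonneg.2 hr.2)]
    rw [this, integral_comp_sub_left (fun x => x ^ q) s, sub_self, integral_rpow (Or.inl hq),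
      Real.zero_rpow hpos.ne', sub_zero]
  have h2 : ∫ r in s..b, |s - r| ^ q = (b - s) ^ (q + 1) / (q + 1) := by
    have : ∫ r in s..b, |s - r| ^ q = ∫ r in s..b, (r - s) ^ q := by
      refine integral_congr fun r hr => ?_
      rw [uIcc_of_le hsb] at hr
      simp only [abs_sub_comm s r, abs_of_nonneg (sub_nonneg.2 hr.1)]
    rw [this, integral_comp_sub_right (fun x => x ^ q) s, sub_self, integral_rpow (Or.inl hq),
      Real.zero_rpow hpos.ne', sub_zero]
  rw [h1, h2, ← add_div]
  have h3 : (s - a) ^ (q + 1) ≤ (b - a) ^ (q + 1) :=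
    Real.rpow_le_rpow (by linarith) (by linarith) hpos.le
  have h4 : (b - s) ^ (q + 1) ≤ (b - a) ^ (q + 1) :=
    Real.rpow_le_rpow (by linarith) (by linarith) hpos.le
  gcongr
  linarith

/-- A kernel on `(a, b]²` whose singularities are at worst of order `q > -1` on the axes and on the
diagonal has double integral of order `(b - a) ^ (q + 2)`. -/
lemma integral_integral_le_of_singular_bound {q K a b : ℝ} (hq : -1 < q) (hq0 : q ≤ 0)
    (hK : 0 ≤ K) (ha : 0 ≤ a) (hab : a < b) {f : ℝ → ℝ → ℝ}
    (hf : ∀ s ∈ Ioc a b, ∀ r ∈ Ioc a b, s ≠ r →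
      ‖f s r‖ ≤ K * (s ^ q + r ^ q + |s - r| ^ q)) :
    ∫ s in a..b, ∫ r in a..b, f s r ≤ 4 * K / (q + 1) * (b - a) ^ (q + 2) := by
  have hpos : 0 < q + 1 := by linarith
  have hδ : 0 < b - a := sub_pos.2 hab
  have hrpow : IntervalIntegrable (fun x : ℝ => x ^ q) volume a b := intervalIntegrable_rpow' hq
  have e : (b - a) ^ (q + 2) = (b - a) * (b - a) ^ (q + 1) := by
    rw [show q + 2 = 1 + (q + 1) by ring, Real.rpow_add hδ, Real.rpow_one]
  set B := (b - a) ^ (q + 1) / (q + 1) with hB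
  have inner : ∀ s ∈ Ioc a b, ‖∫ r in a..b, f s r‖ ≤ K * ((b - a) * s ^ q + 3 * B) := by
    intro s hs
    have hdiag := intervalIntegrable_abs_sub_rpow hq a b s
    have hsum : IntervalIntegrable (fun r : ℝ => s ^ q + r ^ q) volume a b :=
      intervalIntegrable_const.add hrpow
    have hne : ∀ᵐ r : ℝ, r ≠ s := by simp [ae_iff]
    refine (norm_integral_le_of_norm_le hab.le
      (g := fun r => K * (s ^ q + r ^ q + |s - r| ^ q)) ?_ ((hsum.add hdiag).const_mul K)).trans ?_
    · filter_upwards [hne] with r hr hmem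
      exact hf s hs r hmem hr.symm
    · rw [intervalIntegral.integral_const_mul, intervalIntegral.integral_add hsum hdiag,
        intervalIntegral.integral_add intervalIntegrable_const hrpow,
        intervalIntegral.integral_const, smul_eq_mul]
      have h1 := integral_rpow_le hq hq0 ha hab.le
      have h2 := integral_abs_sub_rpow_le hq hs.1.le hs.2
      rw [mul_div_assoc] at h2
      exact mul_le_mul_of_nonneg_left (by linarith) hK
  have hlin : IntervalIntegrable (fun s : ℝ => (b - a) * s ^ q) volume a b := hrpow.const_mul _
  refine (le_abs_self _).trans ((norm_integral_le_of_norm_le hab.le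
    (g := fun s => K * ((b - a) * s ^ q + 3 * B)) (Filter.Eventually.of_forall inner)
    ((hlin.add intervalIntegrable_const).const_mul K)).trans ?_)
  rw [intervalIntegral.integral_const_mul,
    intervalIntegral.integral_add hlin intervalIntegrable_const,
    intervalIntegral.integral_const_mul, intervalIntegral.integral_const, smul_eq_mul]
  have h1 := integral_rpow_le hq hq0 ha hab.le
  calc _ ≤ K * ((b - a) * B + (b - a) * (3 * B)) := by gcongr
    _ = _ := by rw [e, hB]; ring

lemma fbm_kernel_bound {H c M q r d : ℝ} (hH0 : 1 / 2 < H) (hH1 : H < 1) (hr : 0 < r) (hd : 0 < d)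
    (hc : 0 < c) (hcH : c ^ 2 = (1 / 2) * (2 - 2 ^ H))
    (hM : (r + d) ^ (2 * H - 1) * r ^ (2 * H - 1) * (r ^ (-H) * d ^ (-H)) ≤
      M * (r ^ q + d ^ q)) :
    (1 / Real.sqrt (((r + d) * r) ^ (2 * H) -
        ((1 / 2) * ((r + d) ^ (2 * H) + r ^ (2 * H) - d ^ (2 * H))) ^ 2)) *
        (2 * H * (r + d) ^ (2 * H - 1)) * (2 * H * r ^ (2 * H - 1)) ≤
      4 * H ^ 2 / c * M * (r ^ q + d ^ q) := by
  have hdet := fbm_covariance_det_lower_bound hH0 hH1 hr hd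
  rw [← hcH, ← mul_pow] at hdet
  have hsqrt := Real.le_sqrt_of_sq_le hdet
  have hH : 0 < H := by linarith
  calc _ ≤ (1 / (c * (r ^ H * d ^ H))) * (2 * H * (r + d) ^ (2 * H - 1)) *
        (2 * H * r ^ (2 * H - 1)) := by gcongr
    _ = 4 * H ^ 2 / c *
        ((r + d) ^ (2 * H - 1) * r ^ (2 * H - 1) * (r ^ (-H) * d ^ (-H))) := by
      rw [Real.rpow_neg hr.le, Real.rpow_neg hd.le]
      field_simp
      ring
    _ ≤ 4 * H ^ 2 / c * (M * (r ^ q + d ^ q)) := by gcongr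
    _ = _ := by ring

theorem stmt_19 (H T : ℝ) (hH0 : 1 / 2 < H) (hH1 : H < 1) (hT : 0 < T) :
    ∃ C : ℝ, 0 < C ∧ ∀ t t' : ℝ, 0 ≤ t → t < t' → t' ≤ T →
      (∫ s in t..t', ∫ r in t..t',
          (1 / Real.sqrt ((s * r) ^ (2 * H) -
            ((1 / 2) * (s ^ (2 * H) + r ^ (2 * H) - |s - r| ^ (2 * H))) ^ 2)) *
            (2 * H * s ^ (2 * H - 1)) * (2 * H * r ^ (2 * H - 1))) ≤
        C * (t' - t) ^ (2 * (if H ≤ 2 / 3 then H else 1 - H / 2)) := by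
  obtain ⟨M, hM0, hM⟩ := fbm_kernel_majorant hH0 hH1 hT
  have hq : -1 < 2 * (if H ≤ 2 / 3 then H else 1 - H / 2) - 2 ∧
      2 * (if H ≤ 2 / 3 then H else 1 - H / 2) - 2 ≤ 0 := by
    split_ifs <;> constructor <;> linarith
  set q := 2 * (if H ≤ 2 / 3 then H else 1 - H / 2) - 2 with hq_def
  rw [show 2 * (if H ≤ 2 / 3 then H else 1 - H / 2) = q + 2 by rw [hq_def]; ring]
  have hgap : 0 < (1 / 2) * (2 - (2 : ℝ) ^ H) := by
    have := Real.rpow_lt_rpow_of_exponent_lt (by norm_num : (1 : ℝ) < 2) hH1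
    rw [Real.rpow_one] at this
    linarith
  have hc := Real.sqrt_pos.2 hgap
  have hcH := Real.sq_sqrt hgap.le
  set c := Real.sqrt ((1 / 2) * (2 - (2 : ℝ) ^ H))
  have hH : 0 < H := by linarith
  have hpos : 0 < q + 1 := by linarith
  have hK : 0 < 4 * H ^ 2 / c * M := by positivity
  refine ⟨4 * (4 * H ^ 2 / c * M) / (q + 1), by positivity, fun t t' ht htt' ht'T => ?_⟩
  refine integral_integral_le_of_singular_bound hq.1 hq.2 hK.le ht htt' fun s hs r hr hne => ?_
  have hs0 : 0 < s := ht.trans_lt hs.1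
  have hr0 : 0 < r := ht.trans_lt hr.1
  have hsq := Real.rpow_pos_of_pos hs0 q
  have hrq := Real.rpow_pos_of_pos hr0 q
  rw [Real.norm_of_nonneg (by positivity)]
  rcases lt_or_gt_of_ne hne with hlt | hlt
  · have hd : 0 < r - s := sub_pos.2 hlt
    have hb := fbm_kernel_bound hH0 hH1 hs0 hd hc hcH
      (hM s (r - s) hs0 hd (hs.2.trans ht'T) (by linarith [hr.2]))
    rw [add_sub_cancel] at hb
    rw [abs_sub_comm, abs_of_pos hd, mul_comm s r, add_comm (s ^ (2 * H)), mul_right_comm]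
    refine hb.trans ?_
    gcongr
    linarith
  · have hd : 0 < s - r := sub_pos.2 hlt
    have hb := fbm_kernel_bound hH0 hH1 hr0 hd hc hcH
      (hM r (s - r) hr0 hd (hr.2.trans ht'T) (by linarith [hs.2]))
    rw [add_sub_cancel] at hb
    rw [abs_of_pos hd]
    refine hb.trans ?_
    gcongr
    linarith
end
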